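/- (Main theorem, robust finite-time stability.) Under the standing assumptions on the delayed system, let 0 < ε₁ < ε₂ and suppose there exists η > 0 such that C(ε₁, ρ) := ( r₁ E_β((a₀+a₁+η)(T−t₀)^β) + 1 ) ε₁ + r₂ E_β((a₀+a₁+η)(T−t₀)^β) ρ ≤ ε₂, where r₁ = M (a₀+a₁+η)(a₀+a₁) / (η Γ(β+1)), r₂ = M (a₀+a₁+η) a₂ / (η Γ(β+1)), and M = sup_{s∈[t₀,T]} ( (s−t₀)^β / E_β((a₀+a₁+η)(s−t₀)^β) ). Then for every initial function ν with sup_{s∈[t₀−g,t₀]} ‖ν(s)‖ ≤ ε₁ and every disturbance d with ‖d(t)‖ ≤ ρ, any continuous x : [t₀−g, T] → ℝⁿ satisfying x = ν on [t₀−g, t₀] and x(t) = ν(t₀) + (1/Γ(β)) ∫_{t₀}^t (t−s)^{β−1} [A₀ x(s) + A₁ x(s−g(s)) + A₂ d(s) + f(s, x(s), x(s−g(s)), d(s))] ds for t ∈ [t₀, T] satisfies ‖x(t)‖ ≤ ε₂ for all t ∈ [t₀, T]. -/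

import Mathlib

open Set ENNReal MeasureTheory intervalIntegral

/-- Euclidean `ℝⁿ`. -/
abbrev Euc (n : ℕ) := EuclideanSpace ℝ (Fin n)

/-- The Mittag-Leffler function `E_β(t) = Σ_{b ≥ 0} t^b / Γ(bβ + 1)`. -/
noncomputable def mittagLeffler (β t : ℝ) : ℝ :=
  ∑' b : ℕ, t ^ b / Real.Gamma (b * β + 1)

/-- The weight function: `h(s) = 1` for `s ≤ t₀` and `h(s) = E_β(θ (s − t₀)^β)` for `s ≥ t₀`. -/
noncomputable def weight (β t₀ θ : ℝ) (s : ℝ) : ℝ :=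
  if s ≤ t₀ then 1 else mittagLeffler β (θ * (s - t₀) ^ β)

/-- The weighted generalized metric
`ϖ(x₁, x₂) = inf { b ∈ [0, ∞] : ‖x₁(t) − x₂(t)‖ ≤ b h(t) for all t ∈ [t₀ − g, T] }`. -/
noncomputable def genDist {n : ℕ} (β t₀ T g θ : ℝ) (x₁ x₂ : ℝ → Euc n) : ℝ≥0∞ :=
  sInf {b : ℝ≥0∞ | ∀ t ∈ Icc (t₀ - g) T,
    (‖x₁ t - x₂ t‖₊ : ℝ≥0∞) ≤ b * ENNReal.ofReal (weight β t₀ θ t)}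

/-- The integral operator `𝒱`:
`(𝒱 y)(t) = ν(t)` on `[t₀ − g, t₀]` and
`(𝒱 y)(t) = ν(t₀) + (1/Γ(β)) ∫_{t₀}^t (t−s)^{β−1} [A₀ y(s) + A₁ y(s−g(s)) + A₂ d(s)
  + f(s, y(s), y(s−g(s)), d(s))] ds` on `[t₀, T]`. -/
noncomputable def Vop {n p : ℕ} (β t₀ : ℝ)
    (A₀ A₁ : Euc n →L[ℝ] Euc n) (A₂ : Euc p →L[ℝ] Euc n)
    (f : ℝ → Euc n → Euc n → Euc p → Euc n) (d : ℝ → Euc p) (gdel : ℝ → ℝ)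
    (ν : ℝ → Euc n) (y : ℝ → Euc n) : ℝ → Euc n :=
  fun t =>
    if t ≤ t₀ then ν t
    else ν t₀ + (Real.Gamma β)⁻¹ •
      ∫ s in t₀..t, ((t - s) ^ (β - 1)) •
        (A₀ (y s) + A₁ (y (s - gdel s)) + A₂ (d s) + f s (y s) (y (s - gdel s)) (d s))

/-!
The fractional integral of order `β` sends the weight `h(t) = E_β(θ (t - t₀)^β)` to `(h - 1) / θ`,
so it contracts the supremum norm weighted by `1 / h` (Bielecki's norm) with factor `1 / θ`. As `h`
is nondecreasing, evaluating at the delayed time `t - g(t)` costs nothing in this norm. The delayed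
right-hand side therefore contributes the factor `q = (a₀ + a₁) / θ`, which is less than `1` for
`θ = a₀ + a₁ + η`. Measuring the distance of a solution to the constant `ν(t₀)`, one gets
`m ≤ c + q m` with `c = M ((a₀ + a₁) ε₁ + a₂ ρ) / Γ(β + 1)`, hence `m ≤ c / (1 - q) = c θ / η`.
-/

section MittagLeffler

variable {β : ℝ}

lemma rpow_mul_exp_neg_le_Gamma {r x : ℝ} (hr : 0 ≤ r) (hx : 1 ≤ x) :
    r ^ (x - 1) * Real.exp (-r) ≤ Real.Gamma x := by
  have hconv := Real.GammaIntegral_convergent (s := x) (by linarith)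
  have hsub : Ioi r ⊆ Ioi 0 := Ioi_subset_Ioi hr
  rw [Real.Gamma_eq_integral (by linarith)]
  calc r ^ (x - 1) * Real.exp (-r)
      = ∫ t in Ioi r, Real.exp (-t) * r ^ (x - 1) := by
        rw [MeasureTheory.integral_mul_const, integral_exp_neg_Ioi, mul_comm]
    _ ≤ ∫ t in Ioi r, Real.exp (-t) * t ^ (x - 1) := by
        refine setIntegral_mono_on ((integrableOn_exp_neg_Ioi r).mul_const _)
          (hconv.mono_set hsub) measurableSet_Ioi fun t ht => ?_
        have hrt : r ≤ t := le_of_lt ht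
        gcongr
    _ ≤ ∫ t in Ioi 0, Real.exp (-t) * t ^ (x - 1) := by
        refine setIntegral_mono_set hconv ?_ hsub.eventuallyLE
        filter_upwards [ae_restrict_mem measurableSet_Ioi] with t (ht : 0 < t)
        exact mul_nonneg (Real.exp_nonneg _) (Real.rpow_nonneg ht.le _)

lemma Gamma_natCast_mul_add_one_pos (hβ : 0 < β) (b : ℕ) : 0 < Real.Gamma (b * β + 1) :=
  Real.Gamma_pos_of_pos (by positivity)

lemma summable_mittagLeffler (hβ : 0 < β) (t : ℝ) :
    Summable fun b : ℕ => t ^ b / Real.Gamma (b * β + 1) := by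
  -- the lower bound on `Γ` at the radius `r` with `r ^ β = 2 |t| + 1` gives a geometric majorant
  set r : ℝ := (2 * |t| + 1) ^ β⁻¹
  have hr : 0 ≤ r := by positivity
  have hrβ : r ^ β = 2 * |t| + 1 := Real.rpow_inv_rpow (by positivity) hβ.ne'
  have hgeom : Summable fun b : ℕ => Real.exp r * (|t| / (2 * |t| + 1)) ^ b :=
    (summable_geometric_of_lt_one (by positivity)
      ((div_lt_one (by positivity)).mpr (by linarith [abs_nonneg t]))).mul_left _
  refine hgeom.of_norm_bounded fun b => ?_
  have hΓ : (2 * |t| + 1) ^ b * Real.exp (-r) ≤ Real.Gamma (b * β + 1) := by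
    have := rpow_mul_exp_neg_le_Gamma hr (x := b * β + 1) (le_add_of_nonneg_left (by positivity))
    rwa [add_sub_cancel_right, mul_comm (b : ℝ), Real.rpow_mul hr, hrβ, Real.rpow_natCast,
      mul_comm β] at this
  calc ‖t ^ b / Real.Gamma (b * β + 1)‖ = |t| ^ b / Real.Gamma (b * β + 1) := by
        rw [norm_div, norm_pow, Real.norm_eq_abs,
          Real.norm_of_nonneg (Gamma_natCast_mul_add_one_pos hβ b).le]
    _ ≤ |t| ^ b / ((2 * |t| + 1) ^ b * Real.exp (-r)) := by gcongr
    _ = Real.exp r * (|t| / (2 * |t| + 1)) ^ b := by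
        rw [Real.exp_neg, div_pow]
        field_simp

lemma mittagLeffler_zero (β : ℝ) : mittagLeffler β 0 = 1 := by
  rw [mittagLeffler, tsum_eq_single 0 fun b hb => by simp [hb]]
  simp

lemma monotoneOn_mittagLeffler (hβ : 0 < β) : MonotoneOn (mittagLeffler β) (Ici 0) := by
  intro s hs t _ hst
  refine (summable_mittagLeffler hβ s).tsum_le_tsum (fun b => ?_) (summable_mittagLeffler hβ t)
  have := Gamma_natCast_mul_add_one_pos hβ b
  have : 0 ≤ s := hs
  gcongr

lemma one_le_mittagLeffler {t : ℝ} (hβ : 0 < β) (ht : 0 ≤ t) : 1 ≤ mittagLeffler β t :=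
  mittagLeffler_zero β ▸ monotoneOn_mittagLeffler hβ self_mem_Ici ht ht

lemma rpow_sub_le_sSup_mul_mittagLeffler {θ t₀ T : ℝ} (hβ : 0 < β) (hθ : 0 ≤ θ) :
    ∀ s ∈ Icc t₀ T, (s - t₀) ^ β ≤
      sSup ((fun r : ℝ => (r - t₀) ^ β / mittagLeffler β (θ * (r - t₀) ^ β)) '' Icc t₀ T) *
        mittagLeffler β (θ * (s - t₀) ^ β) := by
  have hE {r : ℝ} (hr : t₀ ≤ r) : 1 ≤ mittagLeffler β (θ * (r - t₀) ^ β) :=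
    one_le_mittagLeffler hβ (mul_nonneg hθ (Real.rpow_nonneg (sub_nonneg.mpr hr) _))
  intro s hs
  rw [← div_le_iff₀ (zero_lt_one.trans_le (hE hs.1))]
  refine le_csSup ⟨(T - t₀) ^ β, forall_mem_image.mpr fun r hr => ?_⟩ (mem_image_of_mem _ hs)
  have hr₀ := sub_nonneg.mpr hr.1
  calc (r - t₀) ^ β / mittagLeffler β (θ * (r - t₀) ^ β) ≤ (r - t₀) ^ β :=
        div_le_self (Real.rpow_nonneg hr₀ _) (hE hr.1)
    _ ≤ (T - t₀) ^ β := by gcongr; exact hr.2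

end MittagLeffler

section FractionalIntegral

variable {E : Type*} [NormedAddCommGroup E] [NormedSpace ℝ E] {β a t : ℝ}

/-- The Riemann–Liouville fractional integral `(I^β y)(t)` of order `β` with base point `a`. -/
noncomputable def fractionalIntegral (β a : ℝ) (y : ℝ → E) (t : ℝ) : E :=
  (Real.Gamma β)⁻¹ • ∫ s in a..t, (t - s) ^ (β - 1) • y s

lemma fractionalIntegral_self (β a : ℝ) (y : ℝ → E) : fractionalIntegral β a y a = 0 := by
  rw [fractionalIntegral, intervalIntegral.integral_same, smul_zero]

lemma fractionalIntegral_congr {y z : ℝ → E} (hat : a ≤ t) (h : EqOn y z (Ioc a t)) :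
    fractionalIntegral β a y t = fractionalIntegral β a z t := by
  simp only [fractionalIntegral, intervalIntegral.integral_of_le hat]
  refine congrArg _ (setIntegral_congr_fun measurableSet_Ioc fun s hs => ?_)
  simp only [h hs]

lemma fractionalIntegral_const_smul (β a : ℝ) (c : ℝ) (y : ℝ → E) (t : ℝ) :
    fractionalIntegral β a (fun s => c • y s) t = c • fractionalIntegral β a y t := by
  simp only [fractionalIntegral, smul_comm _ c, intervalIntegral.integral_smul]

lemma fractionalIntegral_add {y z : ℝ → E}
    (hy : IntervalIntegrable (fun s => (t - s) ^ (β - 1) • y s) volume a t)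
    (hz : IntervalIntegrable (fun s => (t - s) ^ (β - 1) • z s) volume a t) :
    fractionalIntegral β a (fun s => y s + z s) t =
      fractionalIntegral β a y t + fractionalIntegral β a z t := by
  simp only [fractionalIntegral, smul_add, intervalIntegral.integral_add hy hz]

lemma intervalIntegrable_sub_rpow (hβ : 0 < β) (a t : ℝ) :
    IntervalIntegrable (fun s => (t - s) ^ (β - 1)) volume a t := by
  simpa using (intervalIntegral.intervalIntegrable_rpow' (a := t - a) (b := 0)
    (r := β - 1) (by linarith)).comp_sub_left t

lemma intervalIntegrable_sub_rpow_smul_of_monotone {φ : ℝ → ℝ} (hβ : 0 < β) (hat : a ≤ t)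
    (hφ : Monotone φ) : IntervalIntegrable (fun s => (t - s) ^ (β - 1) • φ s) volume a t := by
  have hk := intervalIntegrable_sub_rpow hβ a t
  rw [intervalIntegrable_iff_integrableOn_Ioc_of_le hat] at hk ⊢
  refine hk.mul_bdd (c := max |φ a| |φ t|) hφ.measurable.aestronglyMeasurable ?_
  filter_upwards [ae_restrict_mem measurableSet_Ioc] with s hs
  exact abs_le_max_abs_abs (hφ hs.1.le) (hφ hs.2)

lemma norm_fractionalIntegral_le {y : ℝ → E} {φ : ℝ → ℝ} (hβ : 0 < β) (hat : a ≤ t)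
    (hy : ∀ s ∈ Ioc a t, ‖y s‖ ≤ φ s)
    (hφ : IntervalIntegrable (fun s => (t - s) ^ (β - 1) • φ s) volume a t) :
    ‖fractionalIntegral β a y t‖ ≤ fractionalIntegral β a φ t := by
  have hΓ := inv_nonneg.mpr (Real.Gamma_pos_of_pos hβ).le
  rw [fractionalIntegral, fractionalIntegral, norm_smul, Real.norm_of_nonneg hΓ, smul_eq_mul]
  refine mul_le_mul_of_nonneg_left ?_ hΓ
  refine intervalIntegral.norm_integral_le_of_norm_le hat (ae_of_all _ fun s hs => ?_) hφ
  have hk : 0 ≤ (t - s) ^ (β - 1) := Real.rpow_nonneg (sub_nonneg.mpr hs.2) _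
  rw [norm_smul, Real.norm_of_nonneg hk, smul_eq_mul]
  exact mul_le_mul_of_nonneg_left (hy s hs) hk

lemma fractionalIntegral_sub_rpow {γ : ℝ} (hβ : 0 < β) (hγ : -1 < γ) (hat : a < t) :
    fractionalIntegral β a (fun s => (s - a) ^ γ) t =
      Real.Gamma (γ + 1) / Real.Gamma (γ + β + 1) * (t - a) ^ (γ + β) := by
  have hpos : 0 < t - a := sub_pos.mpr hat
  have hbeta : ∫ s in a..t, (t - s) ^ (β - 1) * (s - a) ^ γ =
      (t - a) ^ (γ + β) * ProbabilityTheory.beta (γ + 1) β := by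
    have hshift := intervalIntegral.integral_comp_sub_right (a := a) (b := t)
      (fun s => (t - a - s) ^ (β - 1) * s ^ γ) a
    simp only [sub_sub_sub_cancel_right, sub_self] at hshift
    have hcomplex : ∀ s ∈ uIcc 0 (t - a), (((t - a - s) ^ (β - 1) * s ^ γ : ℝ) : ℂ) =
        (s : ℂ) ^ (((γ + 1 : ℝ) : ℂ) - 1) * (((t - a : ℝ) : ℂ) - s) ^ ((β : ℂ) - 1) := by
      intro s hs
      rw [uIcc_of_le hpos.le] at hs
      rw [Complex.ofReal_mul, Complex.ofReal_cpow (sub_nonneg.mpr hs.2), Complex.ofReal_cpow hs.1]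
      push_cast
      rw [mul_comm, add_sub_cancel_right]
    apply Complex.ofReal_injective
    rw [hshift, ← intervalIntegral.integral_ofReal, intervalIntegral.integral_congr hcomplex,
      Complex.betaIntegral_scaled _ _ hpos, Complex.betaIntegral_eq_Gamma_mul_div _ _
        (by simpa using by linarith) (by simpa using hβ), ProbabilityTheory.beta,
      Complex.ofReal_mul, Complex.ofReal_cpow hpos.le, Complex.ofReal_div, Complex.ofReal_mul,
      ← Complex.Gamma_ofReal, ← Complex.Gamma_ofReal, ← Complex.Gamma_ofReal]
    push_cast
    congr 2
    ring
  have hΓ := (Real.Gamma_pos_of_pos hβ).ne'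
  simp only [fractionalIntegral, smul_eq_mul]
  rw [hbeta, ProbabilityTheory.beta, add_right_comm]
  field_simp

lemma fractionalIntegral_const (hβ : 0 < β) (hat : a ≤ t) (c : ℝ) :
    fractionalIntegral β a (fun _ => c) t = c * ((t - a) ^ β / Real.Gamma (β + 1)) := by
  rcases hat.eq_or_lt with rfl | hat
  · simp [fractionalIntegral_self, Real.zero_rpow hβ.ne']
  · have hone := fractionalIntegral_sub_rpow hβ neg_one_lt_zero hat
    simp only [Real.rpow_zero, zero_add, Real.Gamma_one, one_div_mul_eq_div] at hone
    simpa only [smul_eq_mul, mul_one, hone] using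
      fractionalIntegral_const_smul β a c (fun _ => (1 : ℝ)) t

lemma hasSum_fractionalIntegral {ι : Type*} [Countable ι] {F : ι → ℝ → E} (hβ : 0 < β) (hat : a ≤ t)
    (hF : ∀ i, IntervalIntegrable (fun s => (t - s) ^ (β - 1) • F i s) volume a t)
    (hsum : Summable fun i => fractionalIntegral β a (fun s => ‖F i s‖) t) :
    HasSum (fun i => fractionalIntegral β a (F i) t)
      (fractionalIntegral β a (fun s => ∑' i, F i s) t) := by
  have hΓ := inv_ne_zero (Real.Gamma_pos_of_pos hβ).ne'
  simp only [intervalIntegrable_iff_integrableOn_Ioc_of_le hat] at hF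
  simp only [fractionalIntegral, intervalIntegral.integral_of_le hat, ← tsum_const_smul'',
    smul_eq_mul, summable_mul_left_iff hΓ] at hsum ⊢
  refine (hasSum_integral_of_summable_integral_norm hF (hsum.congr fun i => ?_)).const_smul _
  refine setIntegral_congr_fun measurableSet_Ioc fun s hs => ?_
  simp only [norm_smul, Real.norm_of_nonneg (Real.rpow_nonneg (sub_nonneg.mpr hs.2) _)]

lemma mul_fractionalIntegral_mittagLeffler_term (hβ : 0 < β) (hat : a < t) (θ : ℝ) (b : ℕ) :
    θ * fractionalIntegral β a
        (fun s => (θ * (s - a) ^ β) ^ b / Real.Gamma (b * β + 1)) t =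
      (θ * (t - a) ^ β) ^ (b + 1) / Real.Gamma ((b + 1 : ℕ) * β + 1) := by
  have hΓ := (Gamma_natCast_mul_add_one_pos hβ b).ne'
  have hpow {s : ℝ} (hs : a ≤ s) (k : ℕ) : (θ * (s - a) ^ β) ^ k = θ ^ k * (s - a) ^ (k * β) := by
    rw [mul_pow, mul_comm (k : ℝ), Real.rpow_mul_natCast (sub_nonneg.mpr hs)]
  have hmonomial := fractionalIntegral_sub_rpow hβ
    (show -1 < (b : ℝ) * β from neg_one_lt_zero.trans_le (by positivity)) hat
  have hsucc : ((b + 1 : ℕ) : ℝ) * β = b * β + β := by push_cast; ring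
  rw [fractionalIntegral_congr (z := fun s => θ ^ b / Real.Gamma (b * β + 1) * (s - a) ^ (b * β))
      hat.le fun s hs => by simp only [hpow hs.1.le, mul_div_right_comm]]
  simp only [← smul_eq_mul (θ ^ b / _)]
  rw [fractionalIntegral_const_smul, hmonomial, hpow hat.le, hsucc, smul_eq_mul]
  field_simp
  ring

lemma mul_fractionalIntegral_mittagLeffler (hβ : 0 < β) (hat : a ≤ t) (θ : ℝ) :
    θ * fractionalIntegral β a (fun s => mittagLeffler β (θ * (s - a) ^ β)) t =
      mittagLeffler β (θ * (t - a) ^ β) - 1 := by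
  rcases hat.eq_or_lt with rfl | hat
  · simp [fractionalIntegral_self, Real.zero_rpow hβ.ne', mittagLeffler_zero]
  rcases eq_or_ne θ 0 with rfl | hθ
  · simp [mittagLeffler_zero]
  have hnext (τ : ℝ) := (summable_nat_add_iff 1).mpr (summable_mittagLeffler hβ (τ * (t - a) ^ β))
  have hint (b : ℕ) : IntervalIntegrable (fun s => (t - s) ^ (β - 1) •
      ((θ * (s - a) ^ β) ^ b / Real.Gamma (b * β + 1))) volume a t := by
    refine (intervalIntegrable_sub_rpow hβ a t).smul_continuousOn (Continuous.continuousOn ?_)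
    have : Continuous fun s : ℝ => (s - a) ^ β :=
      (continuous_id.sub continuous_const).rpow_const fun _ => Or.inr hβ.le
    fun_prop
  have hnorm (b : ℕ) : |θ| * fractionalIntegral β a
      (fun s => ‖(θ * (s - a) ^ β) ^ b / Real.Gamma (b * β + 1)‖) t =
        (|θ| * (t - a) ^ β) ^ (b + 1) / Real.Gamma ((b + 1 : ℕ) * β + 1) := by
    rw [← mul_fractionalIntegral_mittagLeffler_term hβ hat]
    refine congrArg _ (fractionalIntegral_congr hat.le fun s hs => ?_)
    simp only [norm_div, norm_pow, norm_mul, Real.norm_eq_abs,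
      abs_of_pos (Gamma_natCast_mul_add_one_pos hβ b),
      abs_of_nonneg (Real.rpow_nonneg (sub_nonneg.mpr hs.1.le) β)]
  have hsum : HasSum
      (fun b : ℕ => fractionalIntegral β a
        (fun s => (θ * (s - a) ^ β) ^ b / Real.Gamma (b * β + 1)) t)
      (fractionalIntegral β a (fun s => mittagLeffler β (θ * (s - a) ^ β)) t) :=
    hasSum_fractionalIntegral hβ hat.le hint <|
      (summable_mul_left_iff (abs_ne_zero.mpr hθ)).mp ((hnext |θ|).congr fun b => (hnorm b).symm)
  rw [mittagLeffler, (summable_mittagLeffler hβ _).tsum_eq_zero_add, ← (hsum.mul_left θ).tsum_eq]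
  simp [mul_fractionalIntegral_mittagLeffler_term hβ hat]

end FractionalIntegral

section Weight

variable {β t₀ θ : ℝ}

lemma weight_eq_mittagLeffler {s : ℝ} (hβ : 0 < β) (hs : t₀ ≤ s) :
    weight β t₀ θ s = mittagLeffler β (θ * (s - t₀) ^ β) := by
  rcases hs.eq_or_lt with rfl | hs
  · simp [weight, Real.zero_rpow hβ.ne', mittagLeffler_zero]
  · simp [weight, hs.not_ge]

lemma one_le_weight (hβ : 0 < β) (hθ : 0 ≤ θ) (s : ℝ) : 1 ≤ weight β t₀ θ s := by
  rcases le_total s t₀ with hs | hs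
  · simp [weight, hs]
  · rw [weight_eq_mittagLeffler hβ hs]
    exact one_le_mittagLeffler hβ (mul_nonneg hθ (Real.rpow_nonneg (sub_nonneg.mpr hs) _))

lemma monotone_weight (hβ : 0 < β) (hθ : 0 ≤ θ) : Monotone (weight β t₀ θ) := by
  intro s t hst
  rcases le_total s t₀ with hs | hs
  · simpa [weight, hs] using one_le_weight hβ hθ t
  · rw [weight_eq_mittagLeffler hβ hs, weight_eq_mittagLeffler hβ (hs.trans hst)]
    have hs₀ := sub_nonneg.mpr hs
    have harg₀ : 0 ≤ θ * (s - t₀) ^ β := mul_nonneg hθ (Real.rpow_nonneg hs₀ _)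
    have harg : θ * (s - t₀) ^ β ≤ θ * (t - t₀) ^ β := by gcongr
    exact monotoneOn_mittagLeffler hβ harg₀ (harg₀.trans harg) harg

lemma mul_fractionalIntegral_weight {t : ℝ} (hβ : 0 < β) (ht : t₀ ≤ t) :
    θ * fractionalIntegral β t₀ (weight β t₀ θ) t = weight β t₀ θ t - 1 := by
  rw [weight_eq_mittagLeffler hβ ht, ← mul_fractionalIntegral_mittagLeffler hβ ht,
    fractionalIntegral_congr ht fun s hs => weight_eq_mittagLeffler hβ hs.1.le]

lemma fractionalIntegral_const_add_weight_le {t K L M : ℝ} (hβ : 0 < β) (hθ : 0 < θ) (ht : t₀ ≤ t)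
    (hK : 0 ≤ K) (hL : 0 ≤ L) (hM : (t - t₀) ^ β ≤ M * weight β t₀ θ t) :
    fractionalIntegral β t₀ (fun s => K + L * weight β t₀ θ s) t ≤
      (K * M / Real.Gamma (β + 1) + L / θ) * weight β t₀ θ t := by
  have hw : fractionalIntegral β t₀ (weight β t₀ θ) t = (weight β t₀ θ t - 1) / θ :=
    eq_div_of_mul_eq hθ.ne' (by rw [mul_comm, mul_fractionalIntegral_weight hβ ht])
  have := Real.Gamma_pos_of_pos (add_pos hβ one_pos)
  calc fractionalIntegral β t₀ (fun s => K + L * weight β t₀ θ s) t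
      = K * ((t - t₀) ^ β / Real.Gamma (β + 1)) + L * ((weight β t₀ θ t - 1) / θ) := by
        rw [← hw, ← fractionalIntegral_const hβ ht K, ← smul_eq_mul L,
          ← fractionalIntegral_const_smul]
        exact fractionalIntegral_add
          (intervalIntegrable_sub_rpow_smul_of_monotone hβ ht monotone_const)
          (intervalIntegrable_sub_rpow_smul_of_monotone hβ ht
            ((monotone_weight hβ hθ.le).const_mul hL))
    _ ≤ K * (M * weight β t₀ θ t / Real.Gamma (β + 1)) + L * (weight β t₀ θ t / θ) := by
        gcongr
        exact sub_le_self _ zero_le_one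
    _ = (K * M / Real.Gamma (β + 1) + L / θ) * weight β t₀ θ t := by ring

end Weight

lemma le_mul_of_self_improving_bound {α : Type*} {S : Set α} {v w : α → ℝ} {c q : ℝ}
    (hv : ∀ s ∈ S, 0 ≤ v s) (hw : ∀ s ∈ S, 0 < w s)
    (hbdd : BddAbove ((fun s => v s / w s) '' S)) (hq : q < 1)
    (himprove : ∀ m, 0 ≤ m → (∀ s ∈ S, v s ≤ m * w s) → ∀ s ∈ S, v s ≤ (c + q * m) * w s) :
    ∀ s ∈ S, v s ≤ c / (1 - q) * w s := by
  intro s hs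
  set m := sSup ((fun s => v s / w s) '' S)
  have hle : ∀ r ∈ S, v r / w r ≤ m := fun r hr => le_csSup hbdd (mem_image_of_mem _ hr)
  have hm : 0 ≤ m := (div_nonneg (hv s hs) (hw s hs).le).trans (hle s hs)
  have hvm : ∀ r ∈ S, v r ≤ m * w r := fun r hr => (div_le_iff₀ (hw r hr)).mp (hle r hr)
  have hm_le : m ≤ c + q * m := csSup_le ⟨_, mem_image_of_mem _ hs⟩ <| forall_mem_image.mpr
    fun r hr => (div_le_iff₀ (hw r hr)).mpr (himprove m hm hvm r hr)
  calc v s ≤ m * w s := hvm s hs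
    _ ≤ c / (1 - q) * w s := by
      have := (hw s hs).le
      gcongr
      rw [le_div_iff₀ (sub_pos.mpr hq)]
      linarith

section VolterraSolution

variable {E : Type*} [NormedAddCommGroup E] [NormedSpace ℝ E]
  {β t₀ T g θ ε a₀ a₁ b m M : ℝ} {gdel : ℝ → ℝ} {ν y x : ℝ → E}

/-- `x` has history `ν` on `[t₀ - g, t₀]` and solves `x = ν(t₀) + I^β y` on `[t₀, T]`, the Volterra
form of the Caputo equation `ᶜD^β x = y`; in a delayed system `y` is the right-hand side evaluated
along `x`. The fractional integral is required to exist, since the Bochner integral of a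
non-integrable function is `0`. -/
structure IsVolterraSolution (β t₀ T g : ℝ) (ν y x : ℝ → E) : Prop where
  continuousOn : ContinuousOn x (Icc (t₀ - g) T)
  eqOn_history : EqOn x ν (Icc (t₀ - g) t₀)
  intervalIntegrable : ∀ t ∈ Icc t₀ T,
    IntervalIntegrable (fun s => (t - s) ^ (β - 1) • y s) volume t₀ t
  eq_add_fractionalIntegral : ∀ t ∈ Icc t₀ T, x t = ν t₀ + fractionalIntegral β t₀ y t

namespace IsVolterraSolution

lemma of_continuousOn (hβ : 0 < β) (hx : ContinuousOn x (Icc (t₀ - g) T))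
    (hxν : EqOn x ν (Icc (t₀ - g) t₀)) (hy : ContinuousOn y (Icc t₀ T))
    (hxy : ∀ t ∈ Icc t₀ T, x t = ν t₀ + fractionalIntegral β t₀ y t) :
    IsVolterraSolution β t₀ T g ν y x where
  continuousOn := hx
  eqOn_history := hxν
  intervalIntegrable t ht := (intervalIntegrable_sub_rpow hβ t₀ t).smul_continuousOn
    (hy.mono (uIcc_of_le ht.1 ▸ Icc_subset_Icc_right ht.2))
  eq_add_fractionalIntegral := hxy

lemma norm_le_of_norm_sub_le (hx : IsVolterraSolution β t₀ T g ν y x) (hβ : 0 < β) (hθ : 0 ≤ θ)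
    (hg : 0 ≤ g) (hν : ∀ s ∈ Icc (t₀ - g) t₀, ‖ν s‖ ≤ ε) (hm : 0 ≤ m)
    (hdist : ∀ s ∈ Icc t₀ T, ‖x s - ν t₀‖ ≤ m * weight β t₀ θ s) :
    ∀ s ∈ Icc (t₀ - g) T, ‖x s‖ ≤ ε + m * weight β t₀ θ s := by
  intro s hs
  rcases le_total s t₀ with h | h
  · rw [hx.eqOn_history ⟨hs.1, h⟩]
    exact le_add_of_le_of_nonneg (hν s ⟨hs.1, h⟩)
      (mul_nonneg hm (zero_le_one.trans (one_le_weight hβ hθ s)))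
  · calc ‖x s‖ ≤ ‖ν t₀‖ + ‖x s - ν t₀‖ := norm_le_norm_add_norm_sub' _ _
      _ ≤ ε + m * weight β t₀ θ s :=
        add_le_add (hν t₀ (right_mem_Icc.mpr (sub_le_self _ hg))) (hdist s ⟨h, hs.2⟩)

lemma norm_sub_le_of_norm_sub_le (hx : IsVolterraSolution β t₀ T g ν y x) (hβ : 0 < β)
    (hθ : 0 < θ) (hg : 0 ≤ g) (hgdel : ∀ t ∈ Icc t₀ T, gdel t ∈ Icc 0 g)
    (ha₀ : 0 ≤ a₀) (ha₁ : 0 ≤ a₁) (hb : 0 ≤ b)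
    (hy : ∀ s ∈ Icc t₀ T, ‖y s‖ ≤ a₀ * ‖x s‖ + a₁ * ‖x (s - gdel s)‖ + b)
    (hν : ∀ s ∈ Icc (t₀ - g) t₀, ‖ν s‖ ≤ ε)
    (hM : ∀ s ∈ Icc t₀ T, (s - t₀) ^ β ≤ M * weight β t₀ θ s) (hm : 0 ≤ m)
    (hdist : ∀ s ∈ Icc t₀ T, ‖x s - ν t₀‖ ≤ m * weight β t₀ θ s) :
    ∀ t ∈ Icc t₀ T, ‖x t - ν t₀‖ ≤
      (((a₀ + a₁) * ε + b) * M / Real.Gamma (β + 1) + (a₀ + a₁) / θ * m) * weight β t₀ θ t := by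
  have hx_le := hx.norm_le_of_norm_sub_le hβ hθ.le hg hν hm hdist
  have hε : 0 ≤ ε := (norm_nonneg _).trans (hν t₀ (right_mem_Icc.mpr (sub_le_self _ hg)))
  have hy_le : ∀ s ∈ Icc t₀ T,
      ‖y s‖ ≤ ((a₀ + a₁) * ε + b) + (a₀ + a₁) * m * weight β t₀ θ s := by
    intro s hs
    obtain ⟨hgdel₀, hgdel_g⟩ := hgdel s hs
    have hx_now := hx_le s ⟨(sub_le_self _ hg).trans hs.1, hs.2⟩
    have hx_delayed : ‖x (s - gdel s)‖ ≤ ε + m * weight β t₀ θ s :=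
      (hx_le _ ⟨sub_le_sub hs.1 hgdel_g, (sub_le_self _ hgdel₀).trans hs.2⟩).trans
        (by gcongr; exact monotone_weight hβ hθ.le (sub_le_self _ hgdel₀))
    calc ‖y s‖ ≤ a₀ * ‖x s‖ + a₁ * ‖x (s - gdel s)‖ + b := hy s hs
      _ ≤ a₀ * (ε + m * weight β t₀ θ s) + a₁ * (ε + m * weight β t₀ θ s) + b := by gcongr
      _ = ((a₀ + a₁) * ε + b) + (a₀ + a₁) * m * weight β t₀ θ s := by ring
  intro t ht
  have hmono : Monotone fun s => ((a₀ + a₁) * ε + b) + (a₀ + a₁) * m * weight β t₀ θ s :=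
    ((monotone_weight hβ hθ.le).const_mul (by positivity)).const_add _
  rw [hx.eq_add_fractionalIntegral t ht, add_sub_cancel_left, div_mul_eq_mul_div]
  exact (norm_fractionalIntegral_le hβ ht.1 (fun s hs => hy_le s ⟨hs.1.le, hs.2.trans ht.2⟩)
    (intervalIntegrable_sub_rpow_smul_of_monotone hβ ht.1 hmono)).trans
    (fractionalIntegral_const_add_weight_le hβ hθ ht.1 (by positivity) (by positivity) (hM t ht))

theorem norm_le_add_mul_weight {η : ℝ} (hx : IsVolterraSolution β t₀ T g ν y x) (hβ : 0 < β)
    (hg : 0 ≤ g) (hη : 0 < η) (hgdel : ∀ t ∈ Icc t₀ T, gdel t ∈ Icc 0 g)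
    (ha₀ : 0 ≤ a₀) (ha₁ : 0 ≤ a₁) (hb : 0 ≤ b) (hθ : θ = a₀ + a₁ + η)
    (hy : ∀ s ∈ Icc t₀ T, ‖y s‖ ≤ a₀ * ‖x s‖ + a₁ * ‖x (s - gdel s)‖ + b)
    (hν : ∀ s ∈ Icc (t₀ - g) t₀, ‖ν s‖ ≤ ε)
    (hM : ∀ s ∈ Icc t₀ T, (s - t₀) ^ β ≤ M * weight β t₀ θ s) :
    ∀ t ∈ Icc t₀ T, ‖x t‖ ≤
      ε + M * θ * ((a₀ + a₁) * ε + b) / (η * Real.Gamma (β + 1)) * weight β t₀ θ t := by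
  have hθ_pos : 0 < θ := hθ ▸ by positivity
  have hw := one_le_weight (t₀ := t₀) hβ hθ_pos.le
  have hbdd : BddAbove ((fun s => ‖x s - ν t₀‖ / weight β t₀ θ s) '' Icc t₀ T) := by
    obtain ⟨B, hB⟩ := isCompact_Icc.bddAbove_image ((hx.continuousOn.mono
      (Icc_subset_Icc_left (sub_le_self _ hg))).sub continuousOn_const).norm
    exact ⟨B, forall_mem_image.mpr fun s hs =>
      (div_le_self (norm_nonneg _) (hw s)).trans (hB (mem_image_of_mem _ hs))⟩
  have hgap : 1 - (a₀ + a₁) / θ = η / θ := by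
    field_simp
    linarith
  have hfactor : (a₀ + a₁) / θ < 1 := sub_pos.mp (hgap ▸ div_pos hη hθ_pos)
  have hdist := le_mul_of_self_improving_bound (fun s _ => norm_nonneg (x s - ν t₀))
    (fun s _ => zero_lt_one.trans_le (hw s)) hbdd hfactor
    fun m hm => hx.norm_sub_le_of_norm_sub_le hβ hθ_pos hg hgdel ha₀ ha₁ hb hy hν hM hm
  intro t ht
  calc ‖x t‖ ≤ ‖ν t₀‖ + ‖x t - ν t₀‖ := norm_le_norm_add_norm_sub' _ _
    _ ≤ ε + ((a₀ + a₁) * ε + b) * M / Real.Gamma (β + 1) / (1 - (a₀ + a₁) / θ) *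
        weight β t₀ θ t :=
      add_le_add (hν t₀ (right_mem_Icc.mpr (sub_le_self _ hg))) (hdist t ht)
    _ = ε + M * θ * ((a₀ + a₁) * ε + b) / (η * Real.Gamma (β + 1)) * weight β t₀ θ t := by
      rw [hgap]
      field_simp

end IsVolterraSolution

end VolterraSolution

section DelayedSystem

variable {E F : Type*} [NormedAddCommGroup E] [NormedSpace ℝ E] [NormedAddCommGroup F]
  [NormedSpace ℝ F]

/-- The right-hand side `A₀ x(s) + A₁ x(s - g(s)) + A₂ d(s) + f(s, x(s), x(s - g(s)), d(s))` of the
delayed system, evaluated along `x`. -/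
def delayedRHS (A₀ A₁ : E →L[ℝ] E) (A₂ : F →L[ℝ] E) (f : ℝ → E → E → F → E) (d : ℝ → F)
    (gdel : ℝ → ℝ) (x : ℝ → E) (s : ℝ) : E :=
  A₀ (x s) + A₁ (x (s - gdel s)) + A₂ (d s) + f s (x s) (x (s - gdel s)) (d s)

variable {A₀ A₁ : E →L[ℝ] E} {A₂ : F →L[ℝ] E} {f : ℝ → E → E → F → E} {d : ℝ → F}
  {gdel : ℝ → ℝ} {ν x : ℝ → E} {t₀ T g : ℝ}

lemma norm_delayedRHS_le {s k : ℝ}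
    (hf : ∀ u₁ u₂ u₃, ‖f s u₁ u₂ u₃‖ ≤ k * (‖u₁‖ + ‖u₂‖ + ‖u₃‖)) :
    ‖delayedRHS A₀ A₁ A₂ f d gdel x s‖ ≤
      (‖A₀‖ + k) * ‖x s‖ + (‖A₁‖ + k) * ‖x (s - gdel s)‖ + (‖A₂‖ + k) * ‖d s‖ :=
  calc ‖delayedRHS A₀ A₁ A₂ f d gdel x s‖
      ≤ ‖A₀ (x s)‖ + ‖A₁ (x (s - gdel s))‖ + ‖A₂ (d s)‖
        + ‖f s (x s) (x (s - gdel s)) (d s)‖ := norm_add₄_le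
    _ ≤ ‖A₀‖ * ‖x s‖ + ‖A₁‖ * ‖x (s - gdel s)‖ + ‖A₂‖ * ‖d s‖
        + k * (‖x s‖ + ‖x (s - gdel s)‖ + ‖d s‖) := by
      gcongr
      exacts [A₀.le_opNorm _, A₁.le_opNorm _, A₂.le_opNorm _, hf _ _ _]
    _ = (‖A₀‖ + k) * ‖x s‖ + (‖A₁‖ + k) * ‖x (s - gdel s)‖ + (‖A₂‖ + k) * ‖d s‖ := by ring

lemma continuousOn_delayedRHS (hgdel_cont : ContinuousOn gdel (Icc t₀ T))
    (hgdel : ∀ t ∈ Icc t₀ T, gdel t ∈ Icc 0 g)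
    (hf : Continuous fun q : ℝ × E × E × F => f q.1 q.2.1 q.2.2.1 q.2.2.2)
    (hd : ContinuousOn d (Icc t₀ T)) (hx : ContinuousOn x (Icc (t₀ - g) T)) :
    ContinuousOn (delayedRHS A₀ A₁ A₂ f d gdel x) (Icc t₀ T) := by
  have hx_now : ContinuousOn x (Icc t₀ T) := hx.mono fun s hs =>
    ⟨by linarith [hs.1, (hgdel s hs).1, (hgdel s hs).2], hs.2⟩
  have hx_delayed : ContinuousOn (fun s => x (s - gdel s)) (Icc t₀ T) :=
    hx.comp (continuousOn_id.sub hgdel_cont) fun s hs =>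
      ⟨sub_le_sub hs.1 (hgdel s hs).2, (sub_le_self _ (hgdel s hs).1).trans hs.2⟩
  exact (((A₀.continuous.comp_continuousOn hx_now).add
    (A₁.continuous.comp_continuousOn hx_delayed)).add (A₂.continuous.comp_continuousOn hd)).add
    (hf.comp_continuousOn (continuousOn_id.prodMk (hx_now.prodMk (hx_delayed.prodMk hd))))

theorem robust_finite_time_stability_general [CompleteSpace E] {β η ρ ε a₀ a₁ a₂ M : ℝ} {κ : ℝ → ℝ}
    (hβ : 0 < β) (hg : 0 ≤ g) (hη : 0 < η) (hgdel : ∀ t ∈ Icc t₀ T, gdel t ∈ Icc 0 g)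
    (hκ : ∀ s ∈ Icc t₀ T, 0 ≤ κ s)
    (hf : ∀ s ∈ Icc t₀ T, ∀ u₁ u₂ u₃, ‖f s u₁ u₂ u₃‖ ≤ κ s * (‖u₁‖ + ‖u₂‖ + ‖u₃‖))
    (hd : ∀ s ∈ Icc t₀ T, ‖d s‖ ≤ ρ) (hν : ∀ s ∈ Icc (t₀ - g) t₀, ‖ν s‖ ≤ ε)
    (ha₀ : ∀ s ∈ Icc t₀ T, ‖A₀‖ + κ s ≤ a₀) (ha₁ : ∀ s ∈ Icc t₀ T, ‖A₁‖ + κ s ≤ a₁)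
    (ha₂ : ∀ s ∈ Icc t₀ T, ‖A₂‖ + κ s ≤ a₂)
    (hM : M = sSup ((fun s : ℝ =>
      (s - t₀) ^ β / mittagLeffler β ((a₀ + a₁ + η) * (s - t₀) ^ β)) '' Icc t₀ T))
    (hx : IsVolterraSolution β t₀ T g ν (delayedRHS A₀ A₁ A₂ f d gdel x) x) :
    ∀ t ∈ Icc t₀ T, ‖x t‖ ≤
      (M * (a₀ + a₁ + η) * (a₀ + a₁) / (η * Real.Gamma (β + 1)) *
          mittagLeffler β ((a₀ + a₁ + η) * (T - t₀) ^ β) + 1) * ε +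
        M * (a₀ + a₁ + η) * a₂ / (η * Real.Gamma (β + 1)) *
          mittagLeffler β ((a₀ + a₁ + η) * (T - t₀) ^ β) * ρ := by
  intro t ht
  have ht₀T : t₀ ≤ T := ht.1.trans ht.2
  have ht₀ : t₀ ∈ Icc t₀ T := left_mem_Icc.mpr ht₀T
  have ha₀_nonneg : 0 ≤ a₀ := (add_nonneg (norm_nonneg _) (hκ t₀ ht₀)).trans (ha₀ t₀ ht₀)
  have ha₁_nonneg : 0 ≤ a₁ := (add_nonneg (norm_nonneg _) (hκ t₀ ht₀)).trans (ha₁ t₀ ht₀)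
  have ha₂_nonneg : 0 ≤ a₂ := (add_nonneg (norm_nonneg _) (hκ t₀ ht₀)).trans (ha₂ t₀ ht₀)
  have hρ : 0 ≤ ρ := (norm_nonneg _).trans (hd t₀ ht₀)
  have hε : 0 ≤ ε := (norm_nonneg _).trans (hν t₀ (right_mem_Icc.mpr (sub_le_self _ hg)))
  set θ := a₀ + a₁ + η with hθ
  have hθ_nonneg : 0 ≤ θ := by positivity
  have hrhs : ∀ s ∈ Icc t₀ T, ‖delayedRHS A₀ A₁ A₂ f d gdel x s‖ ≤
      a₀ * ‖x s‖ + a₁ * ‖x (s - gdel s)‖ + a₂ * ρ := fun s hs => by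
    refine (norm_delayedRHS_le (hf s hs)).trans ?_
    gcongr
    exacts [ha₀ s hs, ha₁ s hs, ha₂ s hs, hd s hs]
  have hM_weight : ∀ s ∈ Icc t₀ T, (s - t₀) ^ β ≤ M * weight β t₀ θ s := fun s hs => by
    rw [weight_eq_mittagLeffler hβ hs.1, hM]
    exact rpow_sub_le_sSup_mul_mittagLeffler hβ hθ_nonneg s hs
  have hM_nonneg : 0 ≤ M := nonneg_of_mul_nonneg_left
    ((Real.rpow_nonneg (sub_self t₀).ge β).trans (hM_weight t₀ ht₀))
    (zero_lt_one.trans_le (one_le_weight hβ hθ_nonneg t₀))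
  have := Real.Gamma_pos_of_pos (add_pos hβ one_pos)
  calc ‖x t‖ ≤ ε + M * θ * ((a₀ + a₁) * ε + a₂ * ρ) / (η * Real.Gamma (β + 1)) *
        weight β t₀ θ t :=
        hx.norm_le_add_mul_weight hβ hg hη hgdel ha₀_nonneg ha₁_nonneg (by positivity) hθ hrhs hν
          hM_weight t ht
    _ ≤ ε + M * θ * ((a₀ + a₁) * ε + a₂ * ρ) / (η * Real.Gamma (β + 1)) * weight β t₀ θ T := by
        gcongr
        exact monotone_weight hβ hθ_nonneg ht.2
    _ = _ := by
        rw [weight_eq_mittagLeffler hβ ht₀T]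
        ring

end DelayedSystem

/-- Main theorem (robust finite-time stability). Under the standing assumptions, if
there is `η > 0` with
`C(ε₁, ρ) = (r₁ E_β((a₀+a₁+η)(T−t₀)^β) + 1) ε₁ + r₂ E_β((a₀+a₁+η)(T−t₀)^β) ρ ≤ ε₂`,
where `r₁ = M(a₀+a₁+η)(a₀+a₁)/(η Γ(β+1))` and `r₂ = M(a₀+a₁+η)a₂/(η Γ(β+1))`, then
every solution of the Volterra integral equation with `‖ν‖ ≤ ε₁` and `‖d(t)‖ ≤ ρ`
satisfies `‖x(t)‖ ≤ ε₂` on `[t₀, T]`. -/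
theorem robust_finite_time_stability {n p : ℕ} (β t₀ T g η : ℝ)
    (hβ0 : 0 < β) (hβ1 : β < 1) (hT : t₀ < T) (hg : 0 ≤ g) (hη : 0 < η)
    (gdel : ℝ → ℝ) (hgdel_cont : ContinuousOn gdel (Icc t₀ T))
    (hgdel_mem : ∀ t ∈ Icc t₀ T, gdel t ∈ Icc 0 g)
    (A₀ A₁ : Euc n →L[ℝ] Euc n) (A₂ : Euc p →L[ℝ] Euc n)
    (κ : ℝ → ℝ) (hκ_cont : Continuous κ) (hκ_nonneg : ∀ s, 0 ≤ κ s)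
    (f : ℝ → Euc n → Euc n → Euc p → Euc n)
    (hf_cont : Continuous fun q : ℝ × Euc n × Euc n × Euc p => f q.1 q.2.1 q.2.2.1 q.2.2.2)
    (hf_lip : ∀ (s : ℝ) (u₁ u₂ : Euc n) (u₃ : Euc p) (w₁ w₂ : Euc n) (w₃ : Euc p),
      ‖f s u₁ u₂ u₃ - f s w₁ w₂ w₃‖ ≤ κ s * (‖u₁ - w₁‖ + ‖u₂ - w₂‖ + ‖u₃ - w₃‖))
    (hf_zero : ∀ s : ℝ, f s 0 0 0 = 0)
    (ρ : ℝ) (hρ : 0 < ρ) (d : ℝ → Euc p) (hd_cont : Continuous d) (hd : ∀ t, ‖d t‖ ≤ ρ)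
    (ν : ℝ → Euc n) (hν : ContinuousOn ν (Icc (t₀ - g) t₀))
    (a₀ a₁ a₂ : ℝ)
    (ha₀ : IsGreatest ((fun s => ‖A₀‖ + κ s) '' Icc t₀ T) a₀)
    (ha₁ : IsGreatest ((fun s => ‖A₁‖ + κ s) '' Icc t₀ T) a₁)
    (ha₂ : IsGreatest ((fun s => ‖A₂‖ + κ s) '' Icc t₀ T) a₂)
    (M : ℝ) (hM : M = sSup ((fun s : ℝ =>
      (s - t₀) ^ β / mittagLeffler β ((a₀ + a₁ + η) * (s - t₀) ^ β)) '' Icc t₀ T))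
    (νnorm : ℝ) (hνnorm : νnorm = sSup ((fun s => ‖ν s‖) '' Icc (t₀ - g) t₀))
    (ε₁ ε₂ : ℝ) (hε₁ : 0 < ε₁) (hε₁₂ : ε₁ < ε₂)
    (hC : (M * (a₀ + a₁ + η) * (a₀ + a₁) / (η * Real.Gamma (β + 1)) *
          mittagLeffler β ((a₀ + a₁ + η) * (T - t₀) ^ β) + 1) * ε₁ +
        M * (a₀ + a₁ + η) * a₂ / (η * Real.Gamma (β + 1)) *
          mittagLeffler β ((a₀ + a₁ + η) * (T - t₀) ^ β) * ρ ≤ ε₂)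
    (hν_small : νnorm ≤ ε₁)
    (x : ℝ → Euc n) (hx_cont : ContinuousOn x (Icc (t₀ - g) T))
    (hx_init : ∀ s ∈ Icc (t₀ - g) t₀, x s = ν s)
    (hx_eq : ∀ t ∈ Icc t₀ T, x t = ν t₀ + (Real.Gamma β)⁻¹ •
      ∫ s in t₀..t, ((t - s) ^ (β - 1)) •
        (A₀ (x s) + A₁ (x (s - gdel s)) + A₂ (d s)
          + f s (x s) (x (s - gdel s)) (d s))) :
    ∀ t ∈ Icc t₀ T, ‖x t‖ ≤ ε₂ := by
  have hν_le : ∀ s ∈ Icc (t₀ - g) t₀, ‖ν s‖ ≤ ε₁ := fun s hs =>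
    (le_csSup (isCompact_Icc.bddAbove_image hν.norm) (mem_image_of_mem _ hs)).trans
      (hνnorm ▸ hν_small)
  have hf_growth (s : ℝ) (u₁ u₂ : Euc n) (u₃ : Euc p) :
      ‖f s u₁ u₂ u₃‖ ≤ κ s * (‖u₁‖ + ‖u₂‖ + ‖u₃‖) := by
    simpa only [hf_zero, sub_zero] using hf_lip s u₁ u₂ u₃ 0 0 0
  have hx : IsVolterraSolution β t₀ T g ν (delayedRHS A₀ A₁ A₂ f d gdel x) x :=
    .of_continuousOn hβ0 hx_cont hx_init
      (continuousOn_delayedRHS hgdel_cont hgdel_mem hf_cont hd_cont.continuousOn hx_cont) hx_eq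
  intro t ht
  exact (robust_finite_time_stability_general hβ0 hg hη hgdel_mem (fun s _ => hκ_nonneg s)
    (fun s _ => hf_growth s) (fun s _ => hd s) hν_le (forall_mem_image.mp ha₀.2)
    (forall_mem_image.mp ha₁.2) (forall_mem_image.mp ha₂.2) hM hx t ht).trans hC
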